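/- arXiv:1905.11390 — 2 statements merged into one kernel-verified Lean document; each statement's English description precedes it below -/
import Mathlib

section
/- Let n ≥ 1, let i ≥ 0 be an integer, and let a, b ∈ F_{2^n} be nonzero. Then the 2-polynomial f(X) = X^{2^i} + a·X^{2^{i+1}} + b·X^{2^{i+2}} ∈ F_{2^n}[X] is not an exceptional scattered polynomial of index 0. -/
/-!
Over a field `F` with `2 ^ k` elements, `f` is scattered iff its slope `g x = f x / x` is injective
on `Fˣ`. For `i = 0` a collision `g z = g (t * z)` amounts to a quadratic equation for `z`, and
square roots exist in `F`. For `i ≥ 1` the values of `g` sum to zero, so an injective `g` misses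
exactly the value `0`, and then `∑ x, g x ^ S = 0` for `0 < S < 2 ^ k - 1`. Take `S = ∑ l, 2 ^ s l`,
where `s` climbs from `0` to `k` in steps `i + 1` and `i + 2`. Expanding `g x ^ S` by Frobenius, the
exponents of `x` are `∑ l, (2 ^ e l - 1) * 2 ^ s l` with `e l ∈ {i, i + 1, i + 2}`, and only those
divisible by `2 ^ k - 1` contribute to the power sum. Since the `s l` are at least two apart, this
happens for a single `e`, the one with `s l + e l = s (l + 1)`; its coefficient is a product of
powers of `a` and `b`, so the power sum is nonzero. Making the last step `i + 2` keeps every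
exponent below `2 * (2 ^ k - 1)`, so divisibility becomes an equation in `ℕ`.
-/

open Finset Function Polynomial

section SparsePowerSums

variable {u : ℕ → ℕ}

theorem three_mul_sum_two_pow_lt (hu : ∀ l, u l + 2 ≤ u (l + 1)) (r : ℕ) :
    3 * ∑ l : Fin r, 2 ^ u l < 2 ^ u r := by
  induction r with
  | zero => simp
  | succ r ih =>
    have hstep : 2 ^ (u r + 2) ≤ 2 ^ u (r + 1) := Nat.pow_le_pow_right two_pos (hu r)
    rw [Fin.sum_univ_castSucc]
    simp only [Fin.val_castSucc, Fin.val_last]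
    lia

theorem sum_two_pow_le_two_mul {r : ℕ} {t : Fin r → ℕ} (ht : ∀ l, t l ≤ u l + 1) :
    ∑ l, 2 ^ t l ≤ 2 * ∑ l : Fin r, 2 ^ u l := by
  rw [mul_sum]
  refine sum_le_sum fun l _ ↦ ?_
  rw [← pow_succ']
  exact Nat.pow_le_pow_right two_pos (ht l)

theorem eq_of_sum_two_pow_eq (hu : ∀ l, u l + 2 ≤ u (l + 1)) {r : ℕ} {t : Fin r → ℕ}
    (ht : ∀ l, t l ≤ u l + 1) (h : ∑ l, 2 ^ t l = ∑ l : Fin r, 2 ^ u l) (l : Fin r) :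
    t l = u l := by
  induction r with
  | zero => exact l.elim0
  | succ r ih =>
    have htail : ∑ l : Fin r, 2 ^ t l.castSucc ≤ 2 * ∑ l : Fin r, 2 ^ u l :=
      sum_two_pow_le_two_mul fun l ↦ ht l.castSucc
    have hsparse := three_mul_sum_two_pow_lt hu r
    rw [Fin.sum_univ_castSucc, Fin.sum_univ_castSucc] at h
    simp only [Fin.val_castSucc, Fin.val_last] at h
    have hlast : t (Fin.last r) = u r := by
      rcases lt_trichotomy (t (Fin.last r)) (u r) with hlt | heq | hgt
      · have : 2 ^ (t (Fin.last r) + 1) ≤ 2 ^ u r := Nat.pow_le_pow_right two_pos hlt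
        lia
      · exact heq
      · have : 2 ^ (u r + 1) ≤ 2 ^ t (Fin.last r) := Nat.pow_le_pow_right two_pos hgt
        lia
    rw [hlast, add_left_inj] at h
    refine Fin.lastCases hlast (fun l ↦ ?_) l
    exact ih (fun l ↦ ht l.castSucc) h l

end SparsePowerSums

section Digits

variable {s : ℕ → ℕ} {r : ℕ}

theorem sum_two_pow_sub_one_mul_add {ι : Type*} (A : Finset ι) (e s : ι → ℕ) :
    ∑ l ∈ A, (2 ^ e l - 1) * 2 ^ s l + ∑ l ∈ A, 2 ^ s l = ∑ l ∈ A, 2 ^ (s l + e l) := by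
  rw [← sum_add_distrib]
  refine sum_congr rfl fun l _ ↦ ?_
  rw [← Nat.succ_mul, Nat.succ_eq_add_one, Nat.sub_add_cancel Nat.one_le_two_pow, pow_add, mul_comm]

theorem one_add_sum_two_pow_succ (hs0 : s 0 = 0) :
    1 + ∑ l : Fin r, 2 ^ s (l + 1) = ∑ l : Fin r, 2 ^ s l + 2 ^ s r := by
  have h := (Fin.sum_univ_succ fun l : Fin (r + 1) ↦ 2 ^ s l).symm.trans (Fin.sum_univ_castSucc _)
  simpa [hs0] using h

theorem sum_two_pow_sub_one_mul_of_add_eq (hs0 : s 0 = 0) {e : Fin r → ℕ}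
    (h : ∀ l : Fin r, s l + e l = s (l + 1)) :
    ∑ l, (2 ^ e l - 1) * 2 ^ s l = 2 ^ s r - 1 := by
  have hadd := sum_two_pow_sub_one_mul_add univ e fun l ↦ s l.val
  simp only [h] at hadd
  have := one_add_sum_two_pow_succ (r := r) hs0
  lia

theorem add_eq_of_dvd_sum_two_pow_sub_one_mul (hs : ∀ l, s l + 2 ≤ s (l + 1)) (hs0 : s 0 = 0)
    {e : Fin (r + 1) → ℕ} (he0 : ∀ l, e l ≠ 0) (he : ∀ l : Fin (r + 1), s l + e l ≤ s (l + 1) + 1)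
    (helast : s r + e (Fin.last r) ≤ s (r + 1))
    (hdvd : 2 ^ s (r + 1) - 1 ∣ ∑ l, (2 ^ e l - 1) * 2 ^ s l) (l : Fin (r + 1)) :
    s l + e l = s (l + 1) := by
  have hadd := sum_two_pow_sub_one_mul_add univ e fun l ↦ s l.val
  have hshift := one_add_sum_two_pow_succ (r := r + 1) hs0
  have hsparse := three_mul_sum_two_pow_lt (u := fun l ↦ s (l + 1)) (fun l ↦ hs (l + 1)) r
  have htail : ∑ l : Fin r, 2 ^ (s l + e l.castSucc) ≤ 2 * ∑ l : Fin r, 2 ^ s (l + 1) :=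
    sum_two_pow_le_two_mul (u := fun l ↦ s (l + 1)) fun l ↦ he l.castSucc
  have hlast : 2 ^ (s r + e (Fin.last r)) ≤ 2 ^ s (r + 1) := Nat.pow_le_pow_right two_pos helast
  have htop : 2 ^ 1 ≤ 2 ^ s (r + 1) := Nat.pow_le_pow_right two_pos (by have := hs r; lia)
  have hpos : 0 < ∑ l, (2 ^ e l - 1) * 2 ^ s l := by
    refine sum_pos (fun l _ ↦ Nat.mul_pos ?_ (by positivity)) univ_nonempty
    exact Nat.sub_pos_of_lt (Nat.one_lt_two_pow (he0 l))
  have hsplit_e := Fin.sum_univ_castSucc fun l ↦ 2 ^ (s l + e l)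
  have hsplit_s := Fin.sum_univ_castSucc fun l : Fin (r + 1) ↦ 2 ^ s (l + 1)
  simp only [Fin.val_castSucc, Fin.val_last] at hsplit_e hsplit_s
  have hsum : ∑ l, (2 ^ e l - 1) * 2 ^ s l = 2 ^ s (r + 1) - 1 := by
    refine Nat.eq_of_dvd_of_lt_two_mul hpos.ne' hdvd ?_
    lia
  exact eq_of_sum_two_pow_eq (u := fun l ↦ s (l + 1)) (fun l ↦ hs (l + 1)) he (by lia) l

theorem exists_partial_sums_of_consecutive_steps {c k : ℕ} (hc : c ≠ 0) (hk : c * c < k) :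
    ∃ (r : ℕ) (s : ℕ → ℕ), s 0 = 0 ∧ s (r + 1) = k ∧ s (r + 1) = s r + (c + 1) ∧
      ∀ l, s (l + 1) = s l + c ∨ s (l + 1) = s l + (c + 1) := by
  obtain ⟨r, hr⟩ : ∃ r, (k - 1) / c = r + 1 := by
    refine Nat.exists_eq_add_one.2 (Nat.div_pos ?_ (Nat.pos_of_ne_zero hc))
    exact Nat.le_sub_one_of_lt (c.le_mul_self.trans_lt hk)
  have hdiv := Nat.div_add_mod (k - 1) c
  have hmod := Nat.mod_lt (k - 1) (Nat.pos_of_ne_zero hc)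
  have hcr : c ≤ r + 1 := by
    rw [← hr, Nat.le_div_iff_mul_le (Nat.pos_of_ne_zero hc)]
    lia
  rw [hr] at hdiv
  set ρ := (k - 1) % c
  -- The first `r - ρ` steps are `c`, the other `ρ + 1` are `c + 1`.
  refine ⟨r, fun l ↦ c * l + (l - (r - ρ)), by simp, ?_, ?_, fun l ↦ ?_⟩
  all_goals
    simp only [mul_add, mul_one] at hdiv ⊢
    lia

end Digits

section PowerSums

variable {F : Type*} [Field F] [Fintype F]

theorem sum_mul_pow_pow_sum_char_pow {R ι κ : Type*} [CommSemiring R] (p : ℕ) [ExpChar R p]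
    [Fintype ι] [Fintype κ] [DecidableEq κ] (w : ι → R) (n : ι → ℕ) (s : κ → ℕ) (x : R) :
    (∑ j, w j * x ^ n j) ^ (∑ l, p ^ s l) =
      ∑ φ : κ → ι, (∏ l, w (φ l) ^ p ^ s l) * x ^ (∑ l, n (φ l) * p ^ s l) := by
  simp_rw [← prod_pow_eq_pow_sum, sum_pow_char_pow p, prod_univ_sum, Fintype.piFinset_univ,
    ← prod_mul_distrib, mul_pow, pow_mul]

theorem sum_units_pow_sum_char_pow_ne_zero [DecidableEq F] {ι κ : Type*} (p : ℕ) [ExpChar F p]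
    [Fintype ι] [Fintype κ] {w : ι → F} {n : ι → ℕ} {s : κ → ℕ} {φ₀ : κ → ι}
    (hφ₀ : ∀ φ : κ → ι, Fintype.card F - 1 ∣ ∑ l, n (φ l) * p ^ s l ↔ φ = φ₀)
    (hw : ∀ l, w (φ₀ l) ≠ 0) :
    ∑ x : Fˣ, (∑ j, w j * (x : F) ^ n j) ^ (∑ l, p ^ s l) ≠ 0 := by
  classical
  simp_rw [sum_mul_pow_pow_sum_char_pow p]
  rw [sum_comm]
  simp_rw [← mul_sum, FiniteField.sum_pow_units, hφ₀]
  simp only [mul_ite, mul_neg, mul_one, mul_zero, sum_ite_eq', mem_univ, if_true, neg_ne_zero]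
  exact prod_ne_zero_iff.2 fun l _ ↦ pow_ne_zero _ (hw l)

theorem sum_units_pow_eq_zero_of_injective [DecidableEq F] {g : Fˣ → F} (hg : Injective g)
    (hsum : ∑ x, g x = 0) {S : ℕ} (hS₀ : S ≠ 0) (hS : S < Fintype.card F - 1) :
    ∑ x, g x ^ S = 0 := by
  obtain ⟨c, hc⟩ : ∃ c, (univ.image g)ᶜ = {c} := by
    rw [← card_eq_one, card_compl, card_image_of_injective _ hg, card_univ, Fintype.card_units]
    lia
  have hsum_add : ∀ T < Fintype.card F - 1, ∑ x, g x ^ T + c ^ T = 0 := fun T hT ↦ by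
    rw [← FiniteField.sum_pow_lt_card_sub_one F T hT, ← sum_add_sum_compl (univ.image g), hc,
      sum_singleton, sum_image hg.injOn]
  have hc₀ : c = 0 := by simpa [hsum] using hsum_add 1 (by lia)
  simpa [hc₀, hS₀] using hsum_add S hS

end PowerSums

section Slope

/-- The slope `f x / x` (for `x ≠ 0`) of the `2`-polynomial `f(X) = ∑ j, w j * X ^ 2 ^ (i + j)`.
Over a field of characteristic two, `f` is scattered of index `0` iff its slope is injective on
nonzero elements. The slope is encoded as a polynomial expression, so that its power sums can be
expanded. -/
def linearizedSlope {R : Type*} [CommSemiring R] {d : ℕ} (i : ℕ) (w : Fin d → R) (x : R) : R :=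
  ∑ j, w j * x ^ (2 ^ (i + j) - 1)

theorem linearizedSlope_mul_self {R : Type*} [CommSemiring R] {d : ℕ} (i : ℕ) (w : Fin d → R)
    (x : R) : linearizedSlope i w x * x = ∑ j, w j * x ^ 2 ^ (i + j) := by
  rw [linearizedSlope, sum_mul]
  refine sum_congr rfl fun j _ ↦ ?_
  rw [mul_assoc, pow_sub_one_mul (by positivity)]

variable {F : Type*} [Field F] [Fintype F] {i k : ℕ}

theorem sum_units_linearizedSlope_eq_zero [DecidableEq F] {d : ℕ} (hi : i ≠ 0)
    (hF : Fintype.card F = 2 ^ k) (hk : i + d ≤ k) (w : Fin d → F) :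
    ∑ x : Fˣ, linearizedSlope i w (x : F) = 0 := by
  simp only [linearizedSlope]
  rw [sum_comm]
  refine sum_eq_zero fun j _ ↦ ?_
  have hlt : 2 ^ (i + j.val) < 2 ^ k := Nat.pow_lt_pow_right one_lt_two (by lia)
  have hgt : 1 < 2 ^ (i + j.val) := Nat.one_lt_two_pow (by lia)
  have hndvd : ¬Fintype.card F - 1 ∣ 2 ^ (i + j.val) - 1 :=
    Nat.not_dvd_of_pos_of_lt (by lia) (by lia)
  rw [← mul_sum, FiniteField.sum_pow_units, if_neg hndvd, mul_zero]

theorem exists_sum_units_linearizedSlope_pow_ne_zero [DecidableEq F] (hi : i ≠ 0)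
    (hF : Fintype.card F = 2 ^ k) (hk : (i + 1) * (i + 1) < k) {w : Fin 3 → F}
    (hw₁ : w 1 ≠ 0) (hw₂ : w 2 ≠ 0) :
    ∃ S ≠ 0, S < Fintype.card F - 1 ∧ ∑ x : Fˣ, linearizedSlope i w (x : F) ^ S ≠ 0 := by
  have : CharP F 2 := charP_of_card_eq_prime_pow hF
  obtain ⟨r, s, hs0, rfl, hlast, hstep⟩ :=
    exists_partial_sums_of_consecutive_steps i.succ_ne_zero hk
  have hs : ∀ l, s l + 2 ≤ s (l + 1) := fun l ↦ by have := hstep l; lia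
  refine ⟨∑ l : Fin (r + 1), 2 ^ s l, ?_, ?_, ?_⟩
  · exact (sum_pos (fun _ _ ↦ by positivity) univ_nonempty).ne'
  · have hsparse := three_mul_sum_two_pow_lt hs (r + 1)
    have : 2 ^ 2 ≤ 2 ^ s (r + 1) := Nat.pow_le_pow_right two_pos (by lia)
    lia
  · let φ₀ : Fin (r + 1) → Fin 3 := fun l ↦ if s (l + 1) = s l + (i + 1) then 1 else 2
    have hφ₀ : ∀ l : Fin (r + 1), s l + (i + φ₀ l) = s (l + 1) := fun l ↦ by
      simp only [φ₀]
      split_ifs with h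
      · simp [h]
      · exact ((hstep l).resolve_left h).symm
    refine sum_units_pow_sum_char_pow_ne_zero 2 (φ₀ := φ₀) (fun φ ↦ ⟨fun hdvd ↦ ?_, ?_⟩) fun l ↦ ?_
    · rw [hF] at hdvd
      have hφ := add_eq_of_dvd_sum_two_pow_sub_one_mul hs hs0 (e := fun l ↦ i + φ l)
        (fun l ↦ by lia) (fun l ↦ by have := hstep l; lia) (by lia) hdvd
      ext l
      have := hφ l
      have := hφ₀ l
      lia
    · rintro rfl
      rw [hF, sum_two_pow_sub_one_mul_of_add_eq hs0 hφ₀]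
    · simp only [φ₀]
      split_ifs <;> assumption

theorem not_injective_linearizedSlope_zero [CharP F 2] (hF : 4 < Fintype.card F) {a b : F}
    (ha : a ≠ 0) (hb : b ≠ 0) :
    ¬Injective fun x : Fˣ ↦ linearizedSlope 0 ![1, a, b] (x : F) := by
  obtain ⟨t, ht⟩ : ∃ t : Fˣ, t ^ 3 ≠ 1 := by
    classical
    refine exists_pow_ne_one_of_isCyclic three_ne_zero ?_
    rw [Nat.card_eq_fintype_card, Fintype.card_units]
    lia
  have ht' : (t : F) ^ 3 ≠ 1 := fun h ↦ ht (Units.ext (by simpa using h))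
  have hquad : (t : F) ^ 2 + t + 1 ≠ 0 := fun h ↦ ht' (by linear_combination ((t : F) - 1) * h)
  obtain ⟨z, hz⟩ := isSquare_of_charTwo' (a / (b * ((t : F) ^ 2 + t + 1)))
  have hz₀ : z ≠ 0 := by
    rintro rfl
    simp [ha, hb, hquad] at hz
  have ha_eq : a = b * ((t : F) ^ 2 + t + 1) * z ^ 2 := by
    rw [div_eq_iff (mul_ne_zero hb hquad)] at hz
    linear_combination hz
  have hcubic : ∀ x : F, linearizedSlope 0 ![1, a, b] x = 1 + a * x + b * x ^ 3 := fun x ↦ by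
    simp [linearizedSlope, Fin.sum_univ_three]
  intro hinj
  have hslope : linearizedSlope 0 ![1, a, b] z = linearizedSlope 0 ![1, a, b] (t * z) := by
    rw [hcubic, hcubic, ha_eq]
    linear_combination (b * z ^ 3 * (1 - t ^ 3)) * CharTwo.two_eq_zero (R := F)
  have heq : Units.mk0 z hz₀ = t * Units.mk0 z hz₀ := hinj hslope
  rw [right_eq_mul] at heq
  exact ht (by rw [heq, one_pow])

theorem not_injective_linearizedSlope (hF : Fintype.card F = 2 ^ k)
    (hk : (i + 1) * (i + 1) + 2 ≤ k) {a b : F} (ha : a ≠ 0) (hb : b ≠ 0) :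
    ¬Injective fun x : Fˣ ↦ linearizedSlope i ![1, a, b] (x : F) := by
  obtain rfl | hi := eq_or_ne i 0
  · have : CharP F 2 := charP_of_card_eq_prime_pow hF
    have : 2 ^ 3 ≤ 2 ^ k := Nat.pow_le_pow_right two_pos hk
    exact not_injective_linearizedSlope_zero (by lia) ha hb
  · classical
    intro hinj
    obtain ⟨S, hS₀, hS, hne⟩ :=
      exists_sum_units_linearizedSlope_pow_ne_zero (w := ![1, a, b]) hi hF (by lia) ha hb
    have hsum := sum_units_linearizedSlope_eq_zero hi hF (by nlinarith) ![1, a, b]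
    exact hne (sum_units_pow_eq_zero_of_injective hinj hsum hS₀ hS)

end Slope

section FrobeniusFixedField

theorem pow_pow_mul_eq_self {M : Type*} [Monoid M] {c : M} {q n : ℕ} (h : c ^ q ^ n = c) (m : ℕ) :
    c ^ q ^ (n * m) = c := by
  have hiter : (· ^ q ^ n)^[m] c = c := iterate_fixed h m
  rwa [pow_iterate, ← pow_mul] at hiter

variable (K : Type*) [Field K] (p k : ℕ)

/-- The subfield `{x | x ^ p ^ k = x}` of `K`, which is the copy of `𝔽_{p ^ k}` inside `K` when `K`
is separably closed of characteristic `p` and `k ≠ 0`. -/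
def frobeniusFixedField [ExpChar K p] : Subfield K :=
  (iterateFrobenius K p k).eqLocusField (RingHom.id K)

variable {k} in
theorem card_frobeniusFixedField [Fact p.Prime] [CharP K p] [IsSepClosed K] (hk : k ≠ 0) :
    Nat.card (frobeniusFixedField K p k) = p ^ k := by
  have hq : 1 < p ^ k := Nat.one_lt_pow hk (Fact.out : p.Prime).one_lt
  have hsep : (X ^ p ^ k - X : K[X]).Separable := galois_poly_separable p _ (dvd_pow_self p hk)
  have hroots : ∀ x, x ∈ (X ^ p ^ k - X : K[X]).rootSet K ↔ x ∈ frobeniusFixedField K p k := by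
    intro x
    have : x ∈ frobeniusFixedField K p k ↔ x ^ p ^ k = x := Iff.rfl
    simp [mem_rootSet, FiniteField.X_pow_card_sub_X_ne_zero K hq, sub_eq_zero, this]
  rw [← Nat.card_congr (Equiv.subtypeEquivRight hroots), Nat.card_eq_fintype_card,
    card_rootSet_eq_natDegree hsep (IsSepClosed.splits_codomain _ hsep),
    FiniteField.X_pow_card_sub_X_natDegree_eq K hq]

end FrobeniusFixedField

theorem stmt_10_general {K : Type*} [Field K] [CharP K 2] [IsSepClosed K] {i k : ℕ} {a b : K}
    (ha : a ≠ 0) (hb : b ≠ 0) (haF : a ^ 2 ^ k = a) (hbF : b ^ 2 ^ k = b)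
    (hscattered : ∀ x y : K, x ≠ 0 → y ≠ 0 → x ^ 2 ^ k = x → y ^ 2 ^ k = y →
      (x ^ 2 ^ i + a * x ^ 2 ^ (i + 1) + b * x ^ 2 ^ (i + 2)) * y =
        (y ^ 2 ^ i + a * y ^ 2 ^ (i + 1) + b * y ^ 2 ^ (i + 2)) * x →
      (y / x) ^ 2 = y / x) :
    k < (i + 1) * (i + 1) + 2 := by
  by_contra! hk
  let L := frobeniusFixedField K 2 k
  have hL : Nat.card L = 2 ^ k := card_frobeniusFixedField K 2 (by lia)
  have : Finite L := Nat.finite_of_card_ne_zero (by simp [hL])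
  have := Fintype.ofFinite L
  rw [Nat.card_eq_fintype_card] at hL
  let a' : L := ⟨a, haF⟩
  let b' : L := ⟨b, hbF⟩
  have ha' : a' ≠ 0 := Subtype.coe_ne_coe.1 ha
  have hb' : b' ≠ 0 := Subtype.coe_ne_coe.1 hb
  refine not_injective_linearizedSlope hL hk ha' hb' fun x y hxy ↦ ?_
  beta_reduce at hxy
  have hcross : (∑ j, ![1, a', b'] j * (x : L) ^ 2 ^ (i + j)) * y =
      (∑ j, ![1, a', b'] j * (y : L) ^ 2 ^ (i + j)) * x := by
    rw [← linearizedSlope_mul_self, ← linearizedSlope_mul_self, hxy, mul_right_comm]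
  have hx : ((x : L) : K) ≠ 0 := Subtype.coe_ne_coe.2 x.ne_zero
  have hy : ((y : L) : K) ≠ 0 := Subtype.coe_ne_coe.2 y.ne_zero
  simp only [Fin.sum_univ_three] at hcross
  have hdiv := hscattered x y hx hy x.1.2 y.1.2 (by simpa using congrArg Subtype.val hcross)
  have : ((y : L) : K) / (x : L) = 1 := by
    simpa [sq, hx, hy] using hdiv
  exact Units.ext (Subtype.ext ((div_eq_one_iff_eq hx).1 this).symm)

/-- Let `n ≥ 1`, `i ≥ 0`, and let `a, b ≠ 0` lie in `F_{2^n}` (realized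
inside an algebraic closure `K` of `F_2` as `{c : c^{2^n} = c}`).  Then the
`2`-polynomial `f(X) = X^{2^i} + a·X^{2^{i+1}} + b·X^{2^{i+2}}` is not exceptional
scattered of index `0`: it is scattered of index `0` over `F_{2^{nm}}` for only finitely
many `m ≥ 1`. -/
theorem stmt_10 (n : ℕ) (hn : 1 ≤ n) (i : ℕ)
    (a b : AlgebraicClosure (ZMod 2)) (ha : a ≠ 0) (hb : b ≠ 0)
    (haF : a ^ 2 ^ n = a) (hbF : b ^ 2 ^ n = b) :
    {m : ℕ | 0 < m ∧ ∀ x y : AlgebraicClosure (ZMod 2),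
        x ≠ 0 → y ≠ 0 → x ^ 2 ^ (n * m) = x → y ^ 2 ^ (n * m) = y →
        (x ^ 2 ^ i + a * x ^ 2 ^ (i + 1) + b * x ^ 2 ^ (i + 2)) * y =
          (y ^ 2 ^ i + a * y ^ 2 ^ (i + 1) + b * y ^ 2 ^ (i + 2)) * x →
        (y / x) ^ 2 = y / x}.Finite := by
  refine (Set.finite_Iio ((i + 1) * (i + 1) + 2)).subset fun m hm ↦ ?_
  exact (Nat.le_mul_of_pos_left m hn).trans_lt <|
    stmt_10_general ha hb (pow_pow_mul_eq_self haF m) (pow_pow_mul_eq_self hbF m) hm.2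
end

section
/- Let K be a finite field with algebraic closure K̄, and let F ∈ K[X,Y] be a squarefree polynomial of total degree d ≥ 1. Suppose F has no absolutely irreducible factor defined over K, i.e., no irreducible factor g ∈ K[X,Y] that remains irreducible in K̄[X,Y]. Then there exist polynomials A, B ∈ K̄[X,Y] with F = A·B, such that A and B have no common irreducible factor, and deg(A)·deg(B) ≥ 2d²/9. -/
/-!
Let `G` be the image of `F` over `K̄`. An irreducible factor `h` of `G` that divided all its Galois
conjugates would be proportional to a polynomial over `K`, hence an absolutely irreducible factor
of `F`. So some conjugate `s h` is not divisible by `h`; then `h * s h` divides `G`, and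
`deg h ≤ d / 2`. Take a divisor `A` of `G` of least degree among those with `deg A ≥ d / 3`.
If `deg A > 2 d / 3`, then `A = h * Q` with `h` irreducible, and since `deg h ≤ d / 2 < deg A`,
minimality gives `deg h < d / 3` and `deg Q < d / 3`, a contradiction. So in `G = A * B` both
degrees lie in `[d / 3, 2 d / 3]`, and their product is at least `2 d² / 9`. Coprimality holds
because `G` is squarefree: its radical is Galois-stable, so it comes from `K`, where it is
divisible by `F`.
-/

open MvPolynomial

section Degree

variable {σ R S : Type*}

lemma totalDegree_map_of_injective [CommSemiring R] [CommSemiring S] {f : R →+* S}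
    (hf : Function.Injective f) (p : MvPolynomial σ R) :
    (map f p).totalDegree = p.totalDegree := by
  simp only [totalDegree, support_map_of_injective p hf]

lemma isLocalHom_map_of_injective [CommRing R] [CommRing S] [IsReduced R] [IsReduced S]
    {f : R →+* S} [IsLocalHom f] (hf : Function.Injective f) :
    IsLocalHom (map (σ := σ) f) where
  map_nonunit p hp := by
    rw [isUnit_iff_totalDegree_of_isReduced, coeff_map, totalDegree_map_of_injective hf] at hp
    exact isUnit_iff_totalDegree_of_isReduced.2 ⟨isUnit_of_map_unit f _ hp.1, hp.2⟩

lemma totalDegree_pos_of_irreducible {k : Type*} [Field k] {p : MvPolynomial σ k}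
    (hp : Irreducible p) : 0 < p.totalDegree := by
  by_contra! hdeg
  obtain ⟨c, rfl⟩ : ∃ c, p = C c := ⟨_, totalDegree_eq_zero_iff_eq_C.1 (Nat.le_zero.1 hdeg)⟩
  have hc : c ≠ 0 := by
    rintro rfl
    exact hp.ne_zero C_0
  exact hp.not_isUnit (hc.isUnit.map C)

variable [CommRing R] [IsDomain R]

lemma exists_eq_C_mul_of_dvd_of_totalDegree_le {p q : MvPolynomial σ R} (hpq : p ∣ q)
    (hq : q ≠ 0) (hdeg : q.totalDegree ≤ p.totalDegree) : ∃ c, q = C c * p := by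
  obtain ⟨r, rfl⟩ := hpq
  rw [totalDegree_mul_of_isDomain (left_ne_zero_of_mul hq) (right_ne_zero_of_mul hq)] at hdeg
  have hr : r = C (coeff 0 r) := totalDegree_eq_zero_iff_eq_C.1 (by lia)
  exact ⟨coeff 0 r, by rw [← hr, mul_comm]⟩

lemma map_eq_self_of_dvd_map {f : R →+* R} (hf : Function.Injective f) {p : MvPolynomial σ R}
    {m : σ →₀ ℕ} (hm : coeff m p = 1) (hdvd : p ∣ map f p) : map f p = p := by
  have hp : p ≠ 0 := by
    rintro rfl
    simp at hm
  obtain ⟨c, hc⟩ := exists_eq_C_mul_of_dvd_of_totalDegree_le hdvd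
    ((map_ne_zero_iff _ (map_injective f hf)).2 hp) (totalDegree_map_of_injective hf p).le
  have hc_one : c = 1 := by simpa [coeff_map, coeff_C_mul, hm] using (congrArg (coeff m) hc).symm
  rw [hc, hc_one, C_1, one_mul]

end Degree

section AlgebraAutomorphism

variable {σ R A : Type*} [CommSemiring R] [CommSemiring A] [Algebra R A]

lemma map_algEquiv_map_algebraMap (s : A ≃ₐ[R] A) (p : MvPolynomial σ R) :
    map (s : A →+* A) (map (algebraMap R A) p) = map (algebraMap R A) p := by
  rw [map_map]
  exact congrArg (map · p) (s : A →ₐ[R] A).comp_algebraMap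

lemma map_algEquiv_dvd_map_algebraMap {q : MvPolynomial σ A} {F : MvPolynomial σ R}
    (hq : q ∣ map (algebraMap R A) F) (s : A ≃ₐ[R] A) :
    map (s : A →+* A) q ∣ map (algebraMap R A) F := by
  simpa only [map_algEquiv_map_algebraMap] using map_dvd (map (s : A →+* A)) hq

end AlgebraAutomorphism

section GaloisDescent

variable {σ K L : Type*} [Field K] [Field L] [Algebra K L]

lemma map_algebraMap_injective : Function.Injective (map (σ := σ) (algebraMap K L)) :=
  map_injective _ (algebraMap K L).injective

lemma two_mul_totalDegree_le_of_not_dvd_map_galois {F : MvPolynomial σ K} (hF : F ≠ 0)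
    {h : MvPolynomial σ L} (hirr : Irreducible h) (hdvd : h ∣ map (algebraMap K L) F)
    {s : Gal(L/K)} (hs : ¬ h ∣ map (s : L →+* L) h) :
    2 * h.totalDegree ≤ F.totalDegree := by
  have hG : map (algebraMap K L) F ≠ 0 := (map_ne_zero_iff _ map_algebraMap_injective).2 hF
  obtain ⟨c, hc⟩ := map_algEquiv_dvd_map_algebraMap hdvd s
  have hmul : h * map (s : L →+* L) h ∣ map (algebraMap K L) F := by
    rw [hc, mul_comm h]
    exact mul_dvd_mul_left _ ((hirr.prime.dvd_or_dvd (hc ▸ hdvd)).resolve_left hs)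
  calc 2 * h.totalDegree
    _ = h.totalDegree + (map (s : L →+* L) h).totalDegree := by
      rw [totalDegree_map_of_injective (s : L →+* L).injective, two_mul]
    _ = (h * map (s : L →+* L) h).totalDegree := by
      have hne := ne_zero_of_dvd_ne_zero hG hmul
      rw [totalDegree_mul_of_isDomain (left_ne_zero_of_mul hne) (right_ne_zero_of_mul hne)]
    _ ≤ (map (algebraMap K L) F).totalDegree := totalDegree_le_of_dvd_of_isDomain hmul hG
    _ = F.totalDegree := totalDegree_map_of_injective (algebraMap K L).injective F

variable [IsGalois K L]

lemma mem_range_map_algebraMap_of_fixed {q : MvPolynomial σ L}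
    (hq : ∀ s : Gal(L/K), map (s : L →+* L) q = q) :
    q ∈ Set.range (map (σ := σ) (algebraMap K L)) := by
  rw [mem_range_map_iff_coeffs_subset]
  intro c hc
  obtain ⟨m, -, rfl⟩ := mem_coeffs_iff.1 hc
  refine (InfiniteGalois.mem_range_algebraMap_iff_fixed _).2 fun s ↦ ?_
  exact (coeff_map (s : L →+* L) q m).symm.trans (congrArg (coeff m) (hq s))

lemma map_algebraMap_dvd_map_algebraMap_iff {p q : MvPolynomial σ K} :
    map (algebraMap K L) p ∣ map (algebraMap K L) q ↔ p ∣ q := by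
  refine ⟨fun ⟨c, hc⟩ ↦ ?_, map_dvd _⟩
  obtain rfl | hp := eq_or_ne p 0
  · rw [map_zero, zero_mul, map_eq_zero_iff _ map_algebraMap_injective] at hc
    exact hc ▸ dvd_rfl
  have hc_fixed (s : Gal(L/K)) : map (s : L →+* L) c = c := by
    have hs := congrArg (map (s : L →+* L)) hc
    rw [map_mul, map_algEquiv_map_algebraMap, map_algEquiv_map_algebraMap, hc] at hs
    exact (mul_left_cancel₀ ((map_ne_zero_iff _ map_algebraMap_injective).2 hp) hs).symm
  obtain ⟨c₀, rfl⟩ := mem_range_map_algebraMap_of_fixed hc_fixed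
  exact ⟨c₀, map_algebraMap_injective (by rw [hc, map_mul])⟩

lemma exists_associated_map_algebraMap_of_dvd_map_galois {q : MvPolynomial σ L} (hq : q ≠ 0)
    (hdvd : ∀ s : Gal(L/K), q ∣ map (s : L →+* L) q) :
    ∃ p : MvPolynomial σ K, Associated (map (algebraMap K L) p) q := by
  obtain ⟨m, hm⟩ := ne_zero_iff.1 hq
  have hunit : IsUnit (C (coeff m q)⁻¹ : MvPolynomial σ L) := (inv_ne_zero hm).isUnit.map C
  obtain ⟨r, hr, hrq⟩ : ∃ r, coeff m r = 1 ∧ Associated r q :=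
    ⟨C (coeff m q)⁻¹ * q, by rw [coeff_C_mul, inv_mul_cancel₀ hm],
      associated_unit_mul_left _ _ hunit⟩
  have hr_fixed (s : Gal(L/K)) : map (s : L →+* L) r = r :=
    map_eq_self_of_dvd_map (s : L →+* L).injective hr
      (hrq.dvd.trans ((hdvd s).trans (map_dvd _ hrq.symm.dvd)))
  obtain ⟨p, rfl⟩ := mem_range_map_algebraMap_of_fixed hr_fixed
  exact ⟨p, hrq⟩

lemma squarefree_map_algebraMap {F : MvPolynomial σ K} (hF : Squarefree F) :
    Squarefree (map (algebraMap K L) F) := by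
  obtain ⟨R, n, hR, hRF, hFR⟩ := exists_squarefree_dvd_pow_of_ne_zero
    ((map_ne_zero_iff _ (map_algebraMap_injective (L := L))).2 hF.ne_zero)
  have hstable (s : Gal(L/K)) : R ∣ map (s : L →+* L) R := by
    refine hR.isRadical n _ (hRF.trans ?_)
    simpa only [map_algEquiv_map_algebraMap, map_pow] using map_dvd (map (s : L →+* L)) hFR
  obtain ⟨R₀, hR₀⟩ := exists_associated_map_algebraMap_of_dvd_map_galois hR.ne_zero hstable
  have hpow : F ∣ R₀ ^ n := by
    rw [← map_algebraMap_dvd_map_algebraMap_iff (L := L), map_pow]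
    exact hFR.trans hR₀.pow_pow.symm.dvd
  exact hR.squarefree_of_dvd ((map_dvd _ (hF.isRadical n _ hpow)).trans hR₀.dvd)

lemma two_mul_totalDegree_le_of_irreducible_dvd {F : MvPolynomial σ K} (hF : F ≠ 0)
    (habs : ∀ g, g ∣ F → ¬ Irreducible (map (algebraMap K L) g))
    {h : MvPolynomial σ L} (hirr : Irreducible h) (hdvd : h ∣ map (algebraMap K L) F) :
    2 * h.totalDegree ≤ F.totalDegree := by
  obtain ⟨s, hs⟩ : ∃ s : Gal(L/K), ¬ h ∣ map (s : L →+* L) h := by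
    by_contra! hstable
    obtain ⟨g, hg⟩ := exists_associated_map_algebraMap_of_dvd_map_galois hirr.ne_zero hstable
    exact habs g (map_algebraMap_dvd_map_algebraMap_iff.1 (hg.dvd.trans hdvd))
      (hg.irreducible_iff.2 hirr)
  exact two_mul_totalDegree_le_of_not_dvd_map_galois hF hirr hdvd hs

end GaloisDescent

section Splitting

lemma exists_dvd_totalDegree_between_thirds {σ k : Type*} [Field k] {G : MvPolynomial σ k}
    (hG : G ≠ 0) (hhalf : ∀ h, Irreducible h → h ∣ G → 2 * h.totalDegree ≤ G.totalDegree) :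
    ∃ A, A ∣ G ∧ G.totalDegree ≤ 3 * A.totalDegree ∧ 3 * A.totalDegree ≤ 2 * G.totalDegree := by
  obtain ⟨A, ⟨hAG, hlow⟩, hmin⟩ := exists_minimalFor_of_wellFoundedLT
    (fun A ↦ A ∣ G ∧ G.totalDegree ≤ 3 * A.totalDegree) totalDegree ⟨G, dvd_rfl, by lia⟩
  refine ⟨A, hAG, hlow, ?_⟩
  by_contra! hhigh
  have hA : A ≠ 0 := ne_zero_of_dvd_ne_zero hG hAG
  have hA_unit : ¬ IsUnit A := fun hu ↦ by
    have := (isUnit_iff_totalDegree_of_isReduced.1 hu).2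
    lia
  obtain ⟨h, hirr, Q, rfl⟩ := WfDvdMonoid.exists_irreducible_factor hA_unit hA
  have hpos := totalDegree_pos_of_irreducible hirr
  have hh := hhalf h hirr (dvd_of_mul_right_dvd hAG)
  rw [totalDegree_mul_of_isDomain hirr.ne_zero (right_ne_zero_of_mul hA)] at hhigh hmin
  have hQ_small : 3 * Q.totalDegree < G.totalDegree := by
    by_contra! hQ_large
    have := hmin ⟨dvd_of_mul_left_dvd hAG, hQ_large⟩ (Nat.le_add_left _ _)
    lia
  have hh_small : 3 * h.totalDegree < G.totalDegree := by
    by_contra! hh_large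
    have := hmin ⟨dvd_of_mul_right_dvd hAG, hh_large⟩ (Nat.le_add_right _ _)
    lia
  lia

lemma two_mul_add_sq_le_nine_mul {R : Type*} [CommRing R] [LinearOrder R] [IsStrictOrderedRing R]
    {a b : R} (hab : a ≤ 2 * b) (hba : b ≤ 2 * a) :
    2 * (a + b) ^ 2 ≤ 9 * (a * b) := by
  linarith [mul_nonneg (sub_nonneg.2 hab) (sub_nonneg.2 hba)]

end Splitting

theorem stmt_13_general {σ K L : Type*} [Field K] [Field L] [Algebra K L] [IsGalois K L]
    (F : MvPolynomial σ K) (hsf : Squarefree F)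
    (habs : ¬ ∃ g : MvPolynomial σ K, Irreducible g ∧ g ∣ F ∧
        Irreducible (map (algebraMap K L) g)) :
    ∃ A B : MvPolynomial σ L,
      map (algebraMap K L) F = A * B ∧
      (∀ g : MvPolynomial σ L, Irreducible g → g ∣ A → ¬ g ∣ B) ∧
      2 * F.totalDegree ^ 2 ≤ 9 * (A.totalDegree * B.totalDegree) := by
  have hG := squarefree_map_algebraMap (L := L) hsf
  have hdeg := totalDegree_map_of_injective (algebraMap K L).injective F
  have := isLocalHom_map_of_injective (σ := σ) (algebraMap K L).injective
  obtain ⟨A, ⟨B, hAB⟩, hlow, hhigh⟩ := exists_dvd_totalDegree_between_thirds hG.ne_zero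
    fun h hirr hdvd ↦ hdeg ▸ two_mul_totalDegree_le_of_irreducible_dvd hsf.ne_zero
      (fun g hgF hg ↦ habs ⟨g, hg.of_map, hgF, hg⟩) hirr hdvd
  have hne : A * B ≠ 0 := hAB ▸ hG.ne_zero
  refine ⟨A, B, hAB, fun g hg hgA hgB ↦ ?_, ?_⟩
  · exact hg.not_isUnit (hG g (hAB ▸ mul_dvd_mul hgA hgB))
  · have hsum := totalDegree_mul_of_isDomain (left_ne_zero_of_mul hne) (right_ne_zero_of_mul hne)
    rw [hAB, hsum] at hdeg hlow hhigh
    rw [← hdeg]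
    exact_mod_cast two_mul_add_sq_le_nine_mul (R := ℤ) (a := A.totalDegree)
      (b := B.totalDegree) (by lia) (by lia)

/-- Let `K` be a finite field with algebraic closure `K̄`, and let
`F ∈ K[X,Y]` be a squarefree polynomial of total degree `d ≥ 1` having no absolutely
irreducible factor defined over `K`.  Then over `K̄` one can write `F = A·B` where `A`
and `B` share no common irreducible factor and `deg(A)·deg(B) ≥ 2d²/9`, i.e.
`9·deg(A)·deg(B) ≥ 2d²`. -/
theorem stmt_13 (K : Type) [Field K] [Fintype K]
    (F : MvPolynomial (Fin 2) K) (hsf : Squarefree F)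
    (hd : 1 ≤ F.totalDegree)
    (habs : ¬ ∃ g : MvPolynomial (Fin 2) K, Irreducible g ∧ g ∣ F ∧
        Irreducible (MvPolynomial.map (algebraMap K (AlgebraicClosure K)) g)) :
    ∃ A B : MvPolynomial (Fin 2) (AlgebraicClosure K),
      MvPolynomial.map (algebraMap K (AlgebraicClosure K)) F = A * B ∧
      (∀ g : MvPolynomial (Fin 2) (AlgebraicClosure K),
        Irreducible g → g ∣ A → ¬ g ∣ B) ∧
      2 * F.totalDegree ^ 2 ≤ 9 * (A.totalDegree * B.totalDegree) := by
  have : IsGalois K (AlgebraicClosure K) := {}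
  exact stmt_13_general F hsf habs
end
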